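/- Every unsatisfiable ℓ-disjoint (k,d)-CSP has more than (1/k)·(d^k/(e·d^{ℓ-1}·k))^{1+1/(ℓ-1)} constraints. -/

import Mathlib

open Finset in
/-- number of assignments avoiding all constraints in `S` -/
noncomputable def cspN {V ι : Type*} [Fintype V] [DecidableEq V] {d : ℕ}
    (vb : ι → Finset V) (val : ι → V → Fin d) (S : Finset ι) : ℕ := by
  classical
  exact ((univ : Finset (V → Fin d)).filter
    (fun α => ∀ i ∈ S, ∃ v ∈ vb i, α v ≠ val i v)).card

open Finset in
open Classical in
lemma csp_indep {V ι : Type*} [Fintype V] [DecidableEq V] {d : ℕ}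
    (vb : ι → Finset V) (val : ι → V → Fin d) (U : Finset ι) (i : ι)
    (hU : ∀ j ∈ U, Disjoint (vb i) (vb j)) :
    d ^ (vb i).card * ((univ : Finset (V → Fin d)).filter
      (fun α => (∀ v ∈ vb i, α v = val i v) ∧ ∀ j ∈ U, ∃ v ∈ vb j, α v ≠ val j v)).card
      ≤ cspN vb val U := by
  have h1 : d ^ (vb i).card = (univ : Finset (vb i → Fin d)).card := by simp
  rw [h1, ← card_product]
  unfold cspN
  refine card_le_card_of_injOn
    (fun q v => if h : v ∈ vb i then q.1 ⟨v, h⟩ else q.2 v) ?_ ?_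
  · rintro ⟨β, α⟩ hq
    simp only [coe_product, Set.mem_prod, coe_filter, mem_univ, true_and, Set.mem_ofPred_eq] at hq ⊢
    intro j hj
    obtain ⟨v, hv, hne⟩ := hq.2.2 j hj
    refine ⟨v, hv, ?_⟩
    have : v ∉ vb i := fun h => (Finset.disjoint_left.mp (hU j hj) h hv)
    simpa [this] using hne
  · rintro ⟨β, α⟩ hq ⟨β', α'⟩ hq' heq
    simp only [coe_product, Set.mem_prod, coe_filter, mem_univ, true_and, Set.mem_ofPred_eq] at hq hq'
    have hc := fun v => congrFun heq v
    simp only at hc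
    ext1
    · funext ⟨v, hv⟩
      simpa [hv] using hc v
    · funext v
      by_cases hv : v ∈ vb i
      · simp [hq.2.1 v hv, hq'.2.1 v hv]
      · simpa [hv] using hc v

open Finset in
open Classical in
lemma csp_step {V ι : Type*} [Fintype V] [DecidableEq V] {d : ℕ}
    (F : Finset ι) (vb : ι → Finset V) (val : ι → V → Fin d) (x : ℝ) (hx0 : 0 ≤ x) (hx1 : x < 1)
    (Δ m : ℕ) (hd : 1 ≤ d) (hm : ∀ i ∈ F, m ≤ (vb i).card)
    (hp : 1 ≤ (d : ℝ) ^ m * (x * (1 - x) ^ Δ))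
    (hΔ : ∀ i ∈ F, (F.filter (fun j => j ≠ i ∧ ¬ Disjoint (vb i) (vb j))).card ≤ Δ)
    (n : ℕ) : ∀ S ⊆ F, S.card = n → ∀ i ∈ F, i ∉ S →
      (1 - x) * (cspN vb val S : ℝ) ≤ cspN vb val (insert i S) := by
  induction n using Nat.strong_induction_on with
  | _ n ih =>
  intro S hS hn i hi hiS
  set T := S.filter (fun j => ¬ Disjoint (vb i) (vb j)) with hT
  set U := S.filter (fun j => Disjoint (vb i) (vb j)) with hUdef
  have hUT : U ∪ T = S := by
    ext j; simp only [hT, hUdef, mem_union, mem_filter]; tauto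
  have hdUT : Disjoint U T := by
    rw [Finset.disjoint_left]; intro j; simp only [hT, hUdef, mem_filter]; tauto
  have hTc : T.card ≤ Δ := by
    refine le_trans (card_le_card ?_) (hΔ i hi)
    intro j hj
    simp only [hT, mem_filter] at hj ⊢
    refine ⟨hS hj.1, ?_, hj.2⟩
    rintro rfl; exact hiS hj.1
  have h1x : 0 ≤ 1 - x := by linarith
  have chain : ∀ T' : Finset ι, T' ⊆ T →
      (1 - x) ^ T'.card * (cspN vb val U : ℝ) ≤ cspN vb val (U ∪ T') := by
    intro T'
    induction T' using Finset.induction_on with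
    | empty => intro _; simp
    | insert j T'' hj ih' =>
      intro hsub
      have hjT : j ∈ T := hsub (mem_insert_self _ _)
      have hsub' : T'' ⊆ T := fun a ha => hsub (mem_insert_of_mem ha)
      have hjU : j ∉ U ∪ T'' := by
        simp only [mem_union, not_or]
        exact ⟨fun h => Finset.disjoint_left.mp hdUT h hjT, hj⟩
      have hsubS : U ∪ T'' ⊆ S := by rw [← hUT]; exact union_subset_union_right hsub'
      have hjS : j ∈ S := (mem_filter.mp hjT).1
      have hlt : (U ∪ T'').card < n := by
        rw [← hn]
        exact card_lt_card ⟨hsubS, fun h => hjU (h hjS)⟩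
      have := ih _ hlt (U ∪ T'') (hsubS.trans hS) rfl j (hS hjS) hjU
      rw [card_insert_of_notMem hj, pow_succ, union_insert]
      calc _ = (1 - x) * ((1 - x) ^ T''.card * (cspN vb val U : ℝ)) := by ring
        _ ≤ (1 - x) * (cspN vb val (U ∪ T'') : ℝ) := mul_le_mul_of_nonneg_left (ih' hsub') h1x
        _ ≤ _ := this
  have hch := chain T subset_rfl
  rw [hUT] at hch
  set B := ((univ : Finset (V → Fin d)).filter
      (fun α => (∀ v ∈ vb i, α v = val i v) ∧ ∀ j ∈ U, ∃ v ∈ vb j, α v ≠ val j v)).card with hB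
  have hind : d ^ (vb i).card * B ≤ cspN vb val U :=
    csp_indep vb val U i (fun j hj => (mem_filter.mp hj).2)
  have hind2 : (d : ℝ) ^ m * B ≤ cspN vb val U := by
    have : d ^ m * B ≤ cspN vb val U :=
      le_trans (Nat.mul_le_mul_right _ (Nat.pow_le_pow_right hd (hm i hi))) hind
    exact_mod_cast this
  have hsplit : cspN vb val S ≤ cspN vb val (insert i S) + B := by
    unfold cspN
    rw [hB]
    refine le_trans (card_le_card ?_) (card_union_le _ _)
    intro α hα
    simp only [mem_filter, mem_univ, true_and, mem_union] at hα ⊢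
    by_cases hb : ∀ v ∈ vb i, α v = val i v
    · right
      exact ⟨hb, fun j hj => hα j (mem_filter.mp hj).1⟩
    · left
      push Not at hb
      intro j hj
      rcases mem_insert.mp hj with rfl | hj
      · exact hb
      · exact hα j hj
  have hsplit' : (cspN vb val S : ℝ) ≤ cspN vb val (insert i S) + B := by exact_mod_cast hsplit
  have hBx : (B : ℝ) ≤ x * cspN vb val S := by
    have hB0 : (0 : ℝ) ≤ B := Nat.cast_nonneg _
    have hpw : (1 - x) ^ Δ ≤ (1 - x) ^ T.card := pow_le_pow_of_le_one h1x (by linarith) hTc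
    have hy : 0 ≤ x * (1 - x) ^ Δ := mul_nonneg hx0 (pow_nonneg h1x _)
    calc (B : ℝ) ≤ ((d : ℝ) ^ m * (x * (1 - x) ^ Δ)) * B := le_mul_of_one_le_left hB0 hp
      _ = (x * (1 - x) ^ Δ) * ((d : ℝ) ^ m * B) := by ring
      _ ≤ (x * (1 - x) ^ Δ) * cspN vb val U := mul_le_mul_of_nonneg_left hind2 hy
      _ ≤ (x * (1 - x) ^ T.card) * cspN vb val U := by gcongr
      _ = x * ((1 - x) ^ T.card * cspN vb val U) := by ring
      _ ≤ _ := mul_le_mul_of_nonneg_left hch hx0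
  linarith

open Finset in
open Classical in
lemma csp_lll {V ι : Type*} [Fintype V] [DecidableEq V] {d : ℕ}
    (F : Finset ι) (vb : ι → Finset V) (val : ι → V → Fin d) (x : ℝ) (hx0 : 0 ≤ x) (hx1 : x < 1)
    (Δ m : ℕ) (hd : 1 ≤ d) (hm : ∀ i ∈ F, m ≤ (vb i).card)
    (hp : 1 ≤ (d : ℝ) ^ m * (x * (1 - x) ^ Δ))
    (hΔ : ∀ i ∈ F, (F.filter (fun j => j ≠ i ∧ ¬ Disjoint (vb i) (vb j))).card ≤ Δ) :
    ∃ α : V → Fin d, ∀ i ∈ F, ∃ v ∈ vb i, α v ≠ val i v := by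
  have key : ∀ S : Finset ι, S ⊆ F → 0 < cspN vb val S := by
    intro S
    induction S using Finset.induction_on with
    | empty =>
      intro _
      unfold cspN
      rw [card_pos]
      exact ⟨fun _ => ⟨0, hd⟩, by simp⟩
    | insert j S hj ih =>
      intro hs
      have h1 := ih (fun a ha => hs (mem_insert_of_mem ha))
      have h2 := csp_step F vb val x hx0 hx1 Δ m hd hm hp hΔ S.card S
        (fun a ha => hs (mem_insert_of_mem ha)) rfl j (hs (mem_insert_self _ _)) hj
      have h3 : (0 : ℝ) < (1 - x) * (cspN vb val S : ℝ) :=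
        mul_pos (by linarith) (by exact_mod_cast h1)
      exact_mod_cast lt_of_lt_of_le h3 h2
  have := key F subset_rfl
  unfold cspN at this
  obtain ⟨α, hα⟩ := card_pos.mp this
  exact ⟨α, (mem_filter.mp hα).2⟩

open Finset in
open Classical in
/-- version without finiteness of the variable type and with the usual constant -/
lemma csp_lll_sym {V ι : Type*} {d : ℕ}
    (F : Finset ι) (vb : ι → Finset V) (val : ι → V → Fin d)
    (m : ℕ) (hm1 : 1 ≤ m) (hd : 2 ≤ d) (hm : ∀ i ∈ F, m ≤ (vb i).card)
    (hΔ : ∀ i ∈ F, Real.exp 1 * ((F.filter (fun j => ¬ Disjoint (vb i) (vb j))).card : ℝ)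
      ≤ (d : ℝ) ^ m) :
    ∃ α : V → Fin d, ∀ i ∈ F, ∃ v ∈ vb i, α v ≠ val i v := by
  rcases F.eq_empty_or_nonempty with rfl | hne
  · exact ⟨fun _ => ⟨0, by omega⟩, by simp⟩
  obtain ⟨i0, hi0, hmax⟩ := exists_max_image F
    (fun i => (F.filter (fun j => ¬ Disjoint (vb i) (vb j))).card) hne
  obtain ⟨Δ, hΔdef⟩ : ∃ Δ, (F.filter (fun j => ¬ Disjoint (vb i0) (vb j))).card = Δ + 1 := by
    refine ⟨_, (Nat.succ_pred_eq_of_pos ?_).symm⟩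
    rw [card_pos]
    refine ⟨i0, mem_filter.mpr ⟨hi0, ?_⟩⟩
    rw [disjoint_self_iff_empty]
    intro h
    have := hm i0 hi0
    rw [h] at this
    simp at this; omega
  have hb := hΔ i0 hi0
  rw [hΔdef] at hb
  push_cast at hb
  have hx : ∃ x : ℝ, 0 ≤ x ∧ x < 1 ∧ 1 ≤ (d : ℝ) ^ m * (x * (1 - x) ^ Δ) := by
    rcases Nat.eq_zero_or_pos Δ with h0 | hpos
    · refine ⟨1 / 2, by norm_num, by norm_num, ?_⟩
      subst h0
      have h2 : (2 : ℝ) ≤ d := by exact_mod_cast hd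
      have : (2 : ℝ) ≤ (d : ℝ) ^ m := le_trans h2 (le_self_pow₀ (by linarith) (by omega))
      simp only [pow_zero]; linarith
    · have hD : (0 : ℝ) < Δ := by exact_mod_cast hpos
      refine ⟨1 / (Δ + 1), by positivity, ?_, ?_⟩
      · rw [div_lt_one (by linarith)]; linarith
      · have e1 : (1 : ℝ) - 1 / (Δ + 1) = ((1 / Δ : ℝ) + 1)⁻¹ := by field_simp; ring
        have e2 : ((1 / Δ : ℝ) + 1) ^ Δ ≤ Real.exp 1 := by
          calc ((1 / Δ : ℝ) + 1) ^ Δ ≤ (Real.exp (1 / Δ)) ^ Δ := by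
                gcongr; exact Real.add_one_le_exp _
            _ = Real.exp 1 := by rw [← Real.exp_nat_mul]; congr 1; field_simp
        rw [e1, inv_pow]
        have hpp : (0 : ℝ) < ((1 / Δ : ℝ) + 1) ^ Δ := by positivity
        rw [← div_eq_mul_inv, div_div, mul_one_div, one_le_div (by positivity)]
        calc _ ≤ ((Δ : ℝ) + 1) * Real.exp 1 := by gcongr
          _ ≤ _ := by linarith
  obtain ⟨x, hx0, hx1, hp⟩ := hx
  set W := F.biUnion vb with hW
  have hsub : ∀ i ∈ F, ∀ v ∈ vb i, v ∈ W := fun i hi v hv => mem_biUnion.mpr ⟨i, hi, hv⟩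
  obtain ⟨α, hα⟩ := csp_lll (V := {v // v ∈ W}) F (fun i => (vb i).subtype (· ∈ W))
    (fun i v => val i v) x hx0 hx1 Δ m (by omega) (by
      intro i hi
      rw [card_subtype, filter_true_of_mem (hsub i hi)]
      exact hm i hi) hp (by
      intro i hi
      have h1 := hmax i hi
      rw [hΔdef] at h1
      have hii : i ∈ F.filter (fun j => ¬ Disjoint (vb i) (vb j)) := by
        refine mem_filter.mpr ⟨hi, ?_⟩
        rw [disjoint_self_iff_empty]
        intro h
        have := hm i hi
        rw [h] at this
        simp at this; omega
      have h2 := card_erase_of_mem hii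
      refine le_trans (card_le_card (t := (F.filter (fun j => ¬ Disjoint (vb i) (vb j))).erase i)
        ?_) (by omega)
      intro j hj
      simp only [mem_filter, mem_erase] at hj ⊢
      refine ⟨hj.2.1, hj.1, ?_⟩
      intro hdis
      apply hj.2.2
      rw [Finset.disjoint_left] at hdis ⊢
      intro v hv hv'
      exact hdis (mem_subtype.mp hv) (mem_subtype.mp hv'))
  refine ⟨fun v => if h : v ∈ W then α ⟨v, h⟩ else ⟨0, by omega⟩, ?_⟩
  intro i hi
  obtain ⟨v, hv, hne⟩ := hα i hi
  refine ⟨v, mem_subtype.mp hv, ?_⟩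
  simpa [v.2] using hne

open Finset in
open Classical in
lemma csp_frequent {V : Type*} {d : ℕ} (k ℓ : ℕ) (hℓ : 2 ≤ ℓ) (hlk : ℓ ≤ k)
    (hd : 2 ≤ d) (F : Finset (Finset (V × Fin d))) (vars : Finset (V × Fin d) → Finset V)
    (val : Finset (V × Fin d) → V → Fin d)
    (hcard : ∀ C ∈ F, (vars C).card = k)
    (hdisj : ∀ C ∈ F, ∀ D ∈ F, C ≠ D → (vars C ∩ vars D).card < ℓ)
    (D : ℝ) (hD : Real.exp 1 * (k * D) ≤ (d : ℝ) ^ (k - ℓ + 1))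
    (X : Finset V) (hX : ((X.card ^ (ℓ - 1) : ℕ) : ℝ) ≤ D)
    (hdeg : ∀ v, v ∉ X → ((F.filter (fun C => v ∈ vars C)).card : ℝ) ≤ D) :
    ∃ α : V → Fin d, ∀ C ∈ F, ∃ v ∈ vars C, α v ≠ val C v := by
  set vb : Finset (V × Fin d) → Finset V :=
    fun C => if (vars C ∩ X).card < ℓ then vars C \ X else vars C with hvb
  have hvbsub : ∀ C, vb C ⊆ vars C := by
    intro C
    simp only [hvb]
    split_ifs
    · exact sdiff_subset
    · exact subset_rfl
  have hdeg' : ∀ v, ((F.filter (fun C => v ∈ vb C)).card : ℝ) ≤ D := by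
    intro v
    by_cases hv : v ∈ X
    · refine le_trans ?_ hX
      have hbig : ∀ C ∈ F.filter (fun C => v ∈ vb C), ∃ A ∈ powersetCard (ℓ - 1) X,
          A ⊆ vars C ∧ v ∉ A ∧ v ∈ vars C := by
        intro C hC
        have hC2 := (mem_filter.mp hC).2
        have hge : ℓ ≤ (vars C ∩ X).card := by
          by_contra hlt
          push Not at hlt
          simp only [hvb, if_pos hlt, mem_sdiff] at hC2
          exact hC2.2 hv
        have hvC := hvbsub C hC2
        have hmem : v ∈ vars C ∩ X := mem_inter.mpr ⟨hvC, hv⟩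
        have : ℓ - 1 ≤ ((vars C ∩ X).erase v).card := by
          rw [card_erase_of_mem hmem]; omega
        obtain ⟨A, hA, hAc⟩ := exists_subset_card_eq this
        refine ⟨A, mem_powersetCard.mpr ⟨fun a ha => ?_, hAc⟩, fun a ha => ?_, fun h => ?_, hvC⟩
        · exact (mem_inter.mp (mem_of_mem_erase (hA ha))).2
        · exact (mem_inter.mp (mem_of_mem_erase (hA ha))).1
        · exact (mem_erase.mp (hA h)).1 rfl
      choose! A hA1 hA2 hA3 hA4 using hbig
      have : (F.filter (fun C => v ∈ vb C)).card ≤ (powersetCard (ℓ - 1) X).card := by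
        refine card_le_card_of_injOn A (fun C hC => hA1 C hC) ?_
        intro C hC C' hC' heq
        by_contra hne
        have h1 := hdisj C (mem_filter.mp hC).1 C' (mem_filter.mp hC').1 hne
        have h2 : insert v (A C) ⊆ vars C ∩ vars C' := by
          intro a ha
          rcases mem_insert.mp ha with rfl | ha
          · exact mem_inter.mpr ⟨hA4 C hC, hA4 C' hC'⟩
          · exact mem_inter.mpr ⟨hA2 C hC ha, hA2 C' hC' (heq ▸ ha)⟩
        have h3 := card_le_card h2
        rw [card_insert_of_notMem (hA3 C hC), (mem_powersetCard.mp (hA1 C hC)).2] at h3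
        omega
      rw [card_powersetCard] at this
      exact_mod_cast this.trans (Nat.choose_le_pow _ _)
    · refine le_trans ?_ (hdeg v hv)
      have : (F.filter (fun C => v ∈ vb C)).card ≤ (F.filter (fun C => v ∈ vars C)).card := by
        refine card_le_card fun C hC => ?_
        rw [mem_filter] at hC ⊢
        exact ⟨hC.1, hvbsub C hC.2⟩
      exact_mod_cast this
  have hD0 : 0 ≤ D := le_trans (Nat.cast_nonneg _) hX
  obtain ⟨α, hα⟩ := csp_lll_sym F vb val (k - ℓ + 1) (by omega) hd (by
      intro C hC
      have h1 := hcard C hC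
      simp only [hvb]
      split_ifs with h
      · have := card_sdiff_add_card_inter (vars C) X
        omega
      · omega) (by
      intro C hC
      refine le_trans (mul_le_mul_of_nonneg_left ?_ (Real.exp_pos 1).le) hD
      have h1 : F.filter (fun j => ¬ Disjoint (vb C) (vb j)) ⊆
          (vb C).biUnion (fun v => F.filter (fun C => v ∈ vb C)) := by
        intro j hj
        rw [mem_filter, Finset.not_disjoint_iff] at hj
        obtain ⟨hj, v, hv, hv'⟩ := hj
        exact mem_biUnion.mpr ⟨v, hv, mem_filter.mpr ⟨hj, hv'⟩⟩
      have h2 := (card_le_card h1).trans card_biUnion_le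
      have h3 : ((F.filter (fun j => ¬ Disjoint (vb C) (vb j))).card : ℝ) ≤
          ∑ v ∈ vb C, ((F.filter (fun C => v ∈ vb C)).card : ℝ) := by exact_mod_cast h2
      refine h3.trans ((sum_le_sum fun v _ => hdeg' v).trans ?_)
      rw [sum_const, nsmul_eq_mul]
      have : (vb C).card ≤ k := by rw [← hcard C hC]; exact card_le_card (hvbsub C)
      gcongr)
  refine ⟨α, fun C hC => ?_⟩
  obtain ⟨v, hv, h⟩ := hα C hC
  exact ⟨v, hvbsub C hv, h⟩

/-- Every unsatisfiable ℓ-disjoint (k,d)-CSP has more than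
(1/k)·(d^k/(e·d^{ℓ-1}·k))^{1+1/(ℓ-1)} constraints. -/
theorem stmt9 {V : Type*} [DecidableEq V] (k d ℓ : ℕ) (hℓ : 2 ≤ ℓ) (hlk : ℓ ≤ k)
    (hd : 2 ≤ d)
    (F : Finset (Finset (V × Fin d)))
    (hcard : ∀ C ∈ F, C.card = k ∧ (C.image Prod.fst).card = k)
    (hdisj : ∀ C ∈ F, ∀ D ∈ F, C ≠ D → ((C.image Prod.fst) ∩ (D.image Prod.fst)).card < ℓ)
    (hunsat : ∀ α : V → Fin d, ∃ C ∈ F, ∀ p ∈ C, α p.1 = p.2) :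
    (1 / (k : ℝ)) * ((d : ℝ) ^ k / (Real.exp 1 * (d : ℝ) ^ (ℓ - 1) * k))
        ^ (1 + ((ℓ : ℝ) - 1)⁻¹)
      < F.card := by
  classical
  have hk : (0 : ℝ) < k := by exact_mod_cast (by omega : 0 < k)
  have hd0 : (0 : ℝ) < d := by exact_mod_cast (by omega : 0 < d)
  have he := Real.exp_pos 1
  set D : ℝ := (d : ℝ) ^ k / (Real.exp 1 * (d : ℝ) ^ (ℓ - 1) * k) with hDdef
  have hD0 : 0 < D := by positivity
  have hDeq : Real.exp 1 * (k * D) = (d : ℝ) ^ (k - ℓ + 1) := by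
    have : (d : ℝ) ^ k = (d : ℝ) ^ (k - ℓ + 1) * (d : ℝ) ^ (ℓ - 1) := by
      rw [← pow_add]; congr 1; omega
    rw [hDdef, this]
    field_simp
  let vars : Finset (V × Fin d) → Finset V := fun C => C.image Prod.fst
  let val : Finset (V × Fin d) → V → Fin d := fun C v =>
    if h : ∃ a, (v, a) ∈ C then h.choose else ⟨0, by omega⟩
  set X : Finset V := (F.biUnion vars).filter
    (fun v => D < ((F.filter (fun C => v ∈ vars C)).card : ℝ)) with hX
  have hl1 : (0 : ℝ) < (ℓ : ℝ) - 1 := by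
    have : (2 : ℝ) ≤ ℓ := by exact_mod_cast hℓ
    linarith
  have hXbig : D ^ (((ℓ : ℝ) - 1)⁻¹) < X.card := by
    by_contra hle
    push Not at hle
    have hpow : ((X.card ^ (ℓ - 1) : ℕ) : ℝ) ≤ D := by
      push_cast
      calc (X.card : ℝ) ^ (ℓ - 1) ≤ (D ^ (((ℓ : ℝ) - 1)⁻¹)) ^ (ℓ - 1) := by gcongr
        _ = D := by
          rw [← Real.rpow_natCast, ← Real.rpow_mul hD0.le, Nat.cast_sub (by omega), Nat.cast_one,
            inv_mul_cancel₀ hl1.ne', Real.rpow_one]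
    obtain ⟨α, hα⟩ := csp_frequent k ℓ hℓ hlk hd F vars val (fun C hC => (hcard C hC).2)
      (fun C hC C' hC' hne => by convert hdisj C hC C' hC' hne) D hDeq.le X hpow (by
        intro v hv
        by_contra hlt
        push Not at hlt
        apply hv
        have hlt' : D < ((F.filter (fun C => v ∈ vars C)).card : ℝ) := by
          refine lt_of_lt_of_eq hlt ?_
          congr!
        have hpos : (0 : ℝ) < ((F.filter (fun C => v ∈ vars C)).card : ℝ) := hD0.trans hlt'
        obtain ⟨C, hC⟩ := Finset.card_pos.mp (by exact_mod_cast hpos)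
        rw [Finset.mem_filter] at hC
        exact Finset.mem_filter.mpr ⟨Finset.mem_biUnion.mpr ⟨C, hC.1, hC.2⟩, hlt'⟩)
    obtain ⟨C, hC, hbad⟩ := hunsat α
    obtain ⟨v, hv, hne⟩ := hα C hC
    obtain ⟨p, hp, rfl⟩ := Finset.mem_image.mp hv
    have hex : ∃ a, (p.1, a) ∈ C := ⟨p.2, hp⟩
    apply hne
    have h2 := hbad _ hex.choose_spec
    simp only [val, dif_pos hex]
    exact h2
  have hsum : ∑ v ∈ X, (F.filter (fun C => v ∈ vars C)).card ≤ F.card * k := by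
    calc ∑ v ∈ X, (F.filter (fun C => v ∈ vars C)).card
        = ∑ C ∈ F, (X.filter (fun v => v ∈ vars C)).card :=
          Finset.sum_card_bipartiteAbove_eq_sum_card_bipartiteBelow (fun v C => v ∈ vars C)
      _ ≤ ∑ C ∈ F, k := by
          refine Finset.sum_le_sum fun C hC => ?_
          rw [← (hcard C hC).2]
          exact Finset.card_le_card fun v hv => (Finset.mem_filter.mp hv).2
      _ = _ := by simp
  have hsum' : ∑ v ∈ X, ((F.filter (fun C => v ∈ vars C)).card : ℝ) ≤ F.card * k := by
    exact_mod_cast hsum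
  have hlow : X.card * D ≤ ∑ v ∈ X, ((F.filter (fun C => v ∈ vars C)).card : ℝ) := by
    rw [← nsmul_eq_mul]
    exact Finset.card_nsmul_le_sum _ _ _ fun v hv => (Finset.mem_filter.mp hv).2.le
  rw [Real.rpow_add hD0, Real.rpow_one, one_div, inv_mul_lt_iff₀ hk]
  calc D * D ^ (((ℓ : ℝ) - 1)⁻¹) < D * X.card := mul_lt_mul_of_pos_left hXbig hD0
    _ ≤ k * F.card := by linarith
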